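/- Along any solution l : [0,∞) → ℝ^E of the extended combinatorial Ricci flow, the functional H̃ satisfies (d/dt) H̃(l(t)) = −Σ_{e∈E} K̃_e(l(t))² ≤ 0 for all t ≥ 0; in particular t ↦ H̃(l(t)) is non-increasing. -/

import Mathlib

noncomputable section

open Real Set Filter

/-- The generalized Euclidean triangle angle `aᵢ(x)` opposite the side of length `x i`,
for a generalized triangle with (positive) side lengths `x 0, x 1, x 2`:
it is `π` if `x i ≥ x j + x k`, `0` if some other side is at least the sum of the
remaining two, and otherwise the usual Euclidean angle `arccos((xⱼ²+x_k²−xᵢ²)/(2xⱼx_k))`. -/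
noncomputable def genAngle (x : Fin 3 → ℝ) (i : Fin 3) : ℝ :=
  if x (i + 1) + x (i + 2) ≤ x i then Real.pi
  else if x i + x (i + 2) ≤ x (i + 1) ∨ x i + x (i + 1) ≤ x (i + 2) then 0
  else Real.arccos
    ((x (i + 1) ^ 2 + x (i + 2) ^ 2 - x i ^ 2) / (2 * x (i + 1) * x (i + 2)))

/-- The three side lengths `e^{(l₁₂+l₃₄)/2}, e^{(l₁₃+l₂₄)/2}, e^{(l₁₄+l₂₃)/2}` of the
generalized Euclidean triangle associated to a length vector `l ∈ ℝ⁶`.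
Edge indices: `0 ↔ {1,2}, 1 ↔ {1,3}, 2 ↔ {1,4}, 3 ↔ {2,3}, 4 ↔ {2,4}, 5 ↔ {3,4}`,
so opposite pairs of edges are `(0,5), (1,4), (2,3)`. -/
noncomputable def triSides (l : Fin 6 → ℝ) (k : Fin 3) : ℝ :=
  if k.val = 0 then Real.exp ((l 0 + l 5) / 2)
  else if k.val = 1 then Real.exp ((l 1 + l 4) / 2)
  else Real.exp ((l 2 + l 3) / 2)

/-- The quad (pair of opposite edges) containing the edge `p`. -/
def quadIndex (p : Fin 6) : Fin 3 :=
  if p.val = 0 ∨ p.val = 5 then 0 else if p.val = 1 ∨ p.val = 4 then 1 else 2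

/-- The extended dihedral angle `α_p(l)` of the generalized decorated tetrahedron with
length vector `l ∈ ℝ⁶` at the edge `p`. -/
noncomputable def dihedral (l : Fin 6 → ℝ) (p : Fin 6) : ℝ :=
  genAngle (triSides l) (quadIndex p)

/-- The edge index in `Fin 6` of the edge `{i,j}` of the tetrahedron on vertices `Fin 4`
(junk value for `i = j`). -/
def edgeOf (i j : Fin 4) : Fin 6 :=
  if (i.val = 0 ∧ j.val = 1) ∨ (i.val = 1 ∧ j.val = 0) then 0
  else if (i.val = 0 ∧ j.val = 2) ∨ (i.val = 2 ∧ j.val = 0) then 1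
  else if (i.val = 0 ∧ j.val = 3) ∨ (i.val = 3 ∧ j.val = 0) then 2
  else if (i.val = 1 ∧ j.val = 2) ∨ (i.val = 2 ∧ j.val = 1) then 3
  else if (i.val = 1 ∧ j.val = 3) ∨ (i.val = 3 ∧ j.val = 1) then 4
  else 5

/-- The two endpoints of the edge `p` of the tetrahedron. -/
def endPts (p : Fin 6) : Fin 4 × Fin 4 :=
  if p.val = 0 then (0, 1) else if p.val = 1 then (0, 2) else if p.val = 2 then (0, 3)
  else if p.val = 3 then (1, 2) else if p.val = 4 then (1, 3) else (2, 3)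

/-- The Lobachevsky function `Λ(x) = −∫₀ˣ ln|2 sin t| dt`. -/
noncomputable def lob (x : ℝ) : ℝ := -∫ t in (0:ℝ)..x, Real.log |2 * Real.sin t|

/-- The volume of the generalized decorated tetrahedron with length vector `l`. -/
noncomputable def vol6 (l : Fin 6 → ℝ) : ℝ := (1 / 2 : ℝ) * ∑ p : Fin 6, lob (dihedral l p)

/-- The co-volume function `cov(l) = 2 vol(l) + Σ α_p(l) l_p` on `ℝ⁶`. -/
noncomputable def cov6 (l : Fin 6 → ℝ) : ℝ := 2 * vol6 l + ∑ p : Fin 6, dihedral l p * l p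

/-- `𝓛 ⊂ ℝ⁶`: length vectors of genuine decorated ideal hyperbolic tetrahedra, i.e. those
whose associated generalized Euclidean triangle satisfies the strict triangle inequalities. -/
def Ldom : Set (Fin 6 → ℝ) :=
  {l | ∀ i : Fin 3, triSides l i < triSides l (i + 1) + triSides l (i + 2)}

/-- The action of `w ∈ ℝ⁴` on `l ∈ ℝ⁶`: `(w + l)_{ij} = l_{ij} + wᵢ + wⱼ`. -/
def act (w : Fin 4 → ℝ) (l : Fin 6 → ℝ) : Fin 6 → ℝ :=
  fun p => l p + w (endPts p).1 + w (endPts p).2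

/-- `ℝ̂⁴ = {w + 0 : w ∈ ℝ⁴} ⊂ ℝ⁶`. -/
def hatR4 : Set (Fin 6 → ℝ) := {x | ∃ w : Fin 4 → ℝ, x = act w 0}

/-- `i, j, k, h` are pairwise distinct, i.e. `{i,j,k,h} = {1,2,3,4}`. -/
def Distinct4 (i j k h : Fin 4) : Prop :=
  i ≠ j ∧ i ≠ k ∧ i ≠ h ∧ j ≠ k ∧ j ≠ h ∧ k ≠ h

variable {T E : Type*}

/-- The length vector in `ℝ⁶` induced on the tetrahedron `σ` by a metric `l : E → ℝ`. -/
def pullback (glue : T → Fin 6 → E) (l : E → ℝ) (σ : T) : Fin 6 → ℝ :=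
  fun p => l (glue σ p)

/-- The generalized Ricci curvature `K̃_e(l) = 2π − Σ_{σ} Σ_{p : glue σ p = e} α_p(l_σ)`. -/
noncomputable def Ric [Fintype T] [DecidableEq E] (glue : T → Fin 6 → E) (l : E → ℝ)
    (e : E) : ℝ :=
  2 * Real.pi -
    ∑ σ : T, ∑ p : Fin 6, if glue σ p = e then dihedral (pullback glue l σ) p else 0

/-- `𝓛(M,𝒯)`: the set of decorated hyperbolic polyhedral metrics. -/
def LMdom (glue : T → Fin 6 → E) : Set (E → ℝ) := {l | ∀ σ : T, pullback glue l σ ∈ Ldom}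

/-- `H̃(l) = Σ_σ cov(l_σ) − 2π Σ_e l_e`. -/
noncomputable def Htilde [Fintype T] [Fintype E] (glue : T → Fin 6 → E) (l : E → ℝ) : ℝ :=
  ∑ σ : T, cov6 (pullback glue l σ) - 2 * Real.pi * ∑ e : E, l e

/-- The valence `d_e` of an edge `e`: the number of pairs `(σ, p)` glued to `e`. -/
def valence [Fintype T] [DecidableEq E] (glue : T → Fin 6 → E) (e : E) : ℕ :=
  ∑ σ : T, ∑ p : Fin 6, if glue σ p = e then 1 else 0

/-- `(M,𝒯)` is edge-transitive: any edge can be mapped to any other edge by an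
automorphism of the triangulation. -/
def EdgeTransitive (glue : T → Fin 6 → E) : Prop :=
  ∀ e e' : E, ∃ (φ : T ≃ T) (ψ : E ≃ E) (ρ : T → Fin 4 ≃ Fin 4),
    (∀ (σ : T) (i j : Fin 4), i ≠ j →
      glue (φ σ) (edgeOf (ρ σ i) (ρ σ j)) = ψ (glue σ (edgeOf i j))) ∧ ψ e = e'


lemma lob_integrable (a b : ℝ) :
    IntervalIntegrable (fun t => Real.log |2 * Real.sin t|) MeasureTheory.volume a b := by
  have h : IntervalIntegrable (fun t => Real.log 2 + (Real.log ∘ Real.sin) t)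
      MeasureTheory.volume a b :=
    (intervalIntegrable_const).add intervalIntegrable_log_sin
  refine h.congr_ae ?_
  have h0 : ∀ᵐ t : ℝ, Real.sin t ≠ 0 := by
    have hc : {t : ℝ | Real.sin t = 0}.Countable := by
      have : {t : ℝ | Real.sin t = 0} ⊆ Set.range (fun n : ℤ => (n : ℝ) * π) := by
        intro t ht
        obtain ⟨n, hn⟩ := Real.sin_eq_zero_iff.1 ht
        exact ⟨n, hn⟩
      exact (Set.countable_range _).mono this
    have := hc.ae_notMem MeasureTheory.volume
    simpa using this
  refine MeasureTheory.ae_restrict_of_ae ?_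
  filter_upwards [h0] with t ht
  simp only [Function.comp]
  rw [Real.log_abs, Real.log_mul (by norm_num) ht]

lemma lob_continuous : Continuous lob := by
  unfold lob
  exact (intervalIntegral.continuous_primitive lob_integrable 0).neg

lemma lob_hasDerivAt {x : ℝ} (h0 : 0 < x) (h1 : x < π) :
    HasDerivAt lob (-Real.log (2 * Real.sin x)) x := by
  have hs := Real.sin_pos_of_pos_of_lt_pi h0 h1
  have hc : ContinuousAt (fun t => Real.log |2 * Real.sin t|) x := by
    apply ContinuousAt.log
    · fun_prop
    · positivity
  have := intervalIntegral.integral_hasDerivAt_right (lob_integrable 0 x)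
    (by
      apply Measurable.stronglyMeasurable _ |>.stronglyMeasurableAtFilter
      fun_prop) hc
  have h2 := this.neg
  rw [abs_of_pos (by positivity)] at h2
  exact h2

lemma quad_cot_nonneg {u v w d1 d2 d3 : ℝ} (hu : 0 < u) (hv : 0 < v) (hw : 0 < w)
    (hs : u + v + w = π) (hd : d1 + d2 + d3 = 0) :
    0 ≤ d1 ^ 2 * (cos u / sin u) + d2 ^ 2 * (cos v / sin v) + d3 ^ 2 * (cos w / sin w) := by
  have su : 0 < sin u := sin_pos_of_pos_of_lt_pi hu (by linarith)
  have sv : 0 < sin v := sin_pos_of_pos_of_lt_pi hv (by linarith)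
  have sw : 0 < sin w := sin_pos_of_pos_of_lt_pi hw (by linarith)
  have hw' : w = π - (u + v) := by linarith
  have e1 : sin w = sin u * cos v + cos u * sin v := by rw [hw', sin_pi_sub, sin_add]
  have e2 : cos w = sin u * sin v - cos u * cos v := by rw [hw', cos_pi_sub, cos_add]; ring
  have hd3 : d3 = -(d1 + d2) := by linarith
  have pu := sin_sq_add_cos_sq u
  have pv := sin_sq_add_cos_sq v
  have key : (d1 ^ 2 * (cos u / sin u) + d2 ^ 2 * (cos v / sin v) + d3 ^ 2 * (cos w / sin w))
      = ((d1 * sin v) ^ 2 + (d2 * sin u) ^ 2 + 2 * (d1 * sin v) * (d2 * sin u) * cos w)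
        / (sin u * sin v * sin w) := by
    field_simp
    rw [hd3, e1, e2]
    have c1 : cos u ^ 2 = 1 - sin u ^ 2 := by linarith
    have c2 : cos v ^ 2 = 1 - sin v ^ 2 := by linarith
    ring_nf
    rw [c1, c2]
    ring
  rw [key]
  apply div_nonneg _ (by positivity)
  have h1 := neg_one_le_cos w
  have h2 := cos_le_one w
  nlinarith [mul_nonneg (sub_nonneg.2 h2) (sq_nonneg (d1 * sin v - d2 * sin u)),
    mul_nonneg (by linarith : 0 ≤ 1 + cos w) (sq_nonneg (d1 * sin v + d2 * sin u))]

lemma vol_tangent {a1 a2 a3 b1 b2 b3 : ℝ} (ha1 : 0 < a1) (ha2 : 0 < a2) (ha3 : 0 < a3)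
    (hb1 : 0 ≤ b1) (hb2 : 0 ≤ b2) (hb3 : 0 ≤ b3)
    (ha : a1 + a2 + a3 = π) (hb : b1 + b2 + b3 = π) :
    lob b1 + lob b2 + lob b3 ≤ lob a1 + lob a2 + lob a3
      - ((b1 - a1) * log (2 * sin a1) + (b2 - a2) * log (2 * sin a2)
        + (b3 - a3) * log (2 * sin a3)) := by
  have hpos : ∀ {a b : ℝ}, 0 < a → 0 ≤ b → ∀ s : ℝ, 0 ≤ s → s < 1 → 0 < a + s * (b - a) := by
    intro a b h1 h2 s h3 h4
    have : a + s * (b - a) = (1 - s) * a + s * b := by ring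
    rw [this]
    have := mul_pos (sub_pos.2 h4) h1
    have := mul_nonneg h3 h2
    linarith
  have hsum : ∀ s : ℝ, (a1 + s * (b1 - a1)) + (a2 + s * (b2 - a2)) + (a3 + s * (b3 - a3)) = π := by
    intro s
    have : b3 = π - b1 - b2 := by linarith
    have : a3 = π - a1 - a2 := by linarith
    subst_vars
    ring
  have hlin : ∀ a b s : ℝ, HasDerivAt (fun s : ℝ => a + s * (b - a)) (b - a) s := by
    intro a b s
    simpa using ((hasDerivAt_id s).mul_const (b - a)).const_add a
  have hl : ∀ a b s : ℝ, 0 < a + s * (b - a) → a + s * (b - a) < π →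
      HasDerivAt (fun s => lob (a + s * (b - a)))
        (-log (2 * sin (a + s * (b - a))) * (b - a)) s := by
    intro a b s h1 h2
    exact HasDerivAt.comp (h₂ := lob) (h := fun s : ℝ => a + s * (b - a)) s
      (lob_hasDerivAt h1 h2) (hlin a b s)
  have hl2 : ∀ a b s : ℝ, 0 < a + s * (b - a) → a + s * (b - a) < π →
      HasDerivAt (fun s => -log (2 * sin (a + s * (b - a))) * (b - a))
        (-((b - a) ^ 2 * (cos (a + s * (b - a)) / sin (a + s * (b - a))))) s := by
    intro a b s h1 h2
    have hs := sin_pos_of_pos_of_lt_pi h1 h2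
    have h3 := ((((hlin a b s).sin).const_mul 2).log (by positivity)).neg.mul_const (b - a)
    refine h3.congr_deriv ?_
    field_simp
  set g : ℝ → ℝ := fun s => lob (a1 + s * (b1 - a1)) + lob (a2 + s * (b2 - a2))
    + lob (a3 + s * (b3 - a3)) with hg
  set g' : ℝ → ℝ := fun s => -log (2 * sin (a1 + s * (b1 - a1))) * (b1 - a1)
    + -log (2 * sin (a2 + s * (b2 - a2))) * (b2 - a2)
    + -log (2 * sin (a3 + s * (b3 - a3))) * (b3 - a3) with hg'
  have hdg : ∀ s : ℝ, 0 ≤ s → s < 1 → HasDerivAt g (g' s) s := by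
    intro s h0 h1
    have p1 := hpos ha1 hb1 s h0 h1
    have p2 := hpos ha2 hb2 s h0 h1
    have p3 := hpos ha3 hb3 s h0 h1
    have := hsum s
    exact ((hl a1 b1 s p1 (by linarith)).add (hl a2 b2 s p2 (by linarith))).add
      (hl a3 b3 s p3 (by linarith))
  have hconc : ConcaveOn ℝ (Set.Icc (0:ℝ) 1) g := by
    refine concaveOn_of_hasDerivWithinAt2_nonpos (convex_Icc 0 1) (f' := g')
      (f'' := fun s => -((b1 - a1) ^ 2 * (cos (a1 + s * (b1 - a1)) / sin (a1 + s * (b1 - a1))))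
        + -((b2 - a2) ^ 2 * (cos (a2 + s * (b2 - a2)) / sin (a2 + s * (b2 - a2))))
        + -((b3 - a3) ^ 2 * (cos (a3 + s * (b3 - a3)) / sin (a3 + s * (b3 - a3))))) ?_ ?_ ?_ ?_
    · have := lob_continuous
      apply Continuous.continuousOn
      fun_prop
    · intro s hs
      rw [interior_Icc] at hs
      exact (hdg s hs.1.le hs.2).hasDerivWithinAt
    · intro s hs
      rw [interior_Icc] at hs
      have p1 := hpos ha1 hb1 s hs.1.le hs.2
      have p2 := hpos ha2 hb2 s hs.1.le hs.2
      have p3 := hpos ha3 hb3 s hs.1.le hs.2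
      have := hsum s
      exact (((hl2 a1 b1 s p1 (by linarith)).add (hl2 a2 b2 s p2 (by linarith))).add
        (hl2 a3 b3 s p3 (by linarith))).hasDerivWithinAt
    · intro s hs
      rw [interior_Icc] at hs
      have p1 := hpos ha1 hb1 s hs.1.le hs.2
      have p2 := hpos ha2 hb2 s hs.1.le hs.2
      have p3 := hpos ha3 hb3 s hs.1.le hs.2
      have := quad_cot_nonneg p1 p2 p3 (hsum s)
        (show (b1 - a1) + (b2 - a2) + (b3 - a3) = 0 by linarith)
      linarith
  have h := hconc.slope_le_of_hasDerivAt (x := 0) (y := 1) (by simp) (by simp) one_pos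
    (hdg 0 le_rfl one_pos)
  rw [slope_def_field] at h
  simp only [hg, hg', one_mul, zero_mul, add_zero, sub_zero, div_one, add_sub_cancel] at h
  linarith

/-- The angle opposite to the side `e^p` as a single `arccos` (valid also in degenerate cases). -/
def ang (p q r : ℝ) : ℝ :=
  arccos ((exp q ^ 2 + exp r ^ 2 - exp p ^ 2) / (2 * exp q * exp r))

lemma ang_swap (p q r : ℝ) : ang p q r = ang p r q := by
  unfold ang
  congr 1
  ring

lemma ang_nonneg (p q r : ℝ) : 0 ≤ ang p q r := arccos_nonneg _

lemma ang_le (p q r : ℝ) : ang p q r ≤ π := arccos_le_pi _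

lemma ang_eq_pi {p q r : ℝ} (h : exp q + exp r ≤ exp p) : ang p q r = π := by
  unfold ang
  apply arccos_of_le_neg_one
  have := exp_pos q
  have := exp_pos r
  rw [div_le_iff₀ (by positivity)]
  nlinarith

lemma ang_eq_zero {p q r : ℝ} (h : exp p + exp r ≤ exp q) : ang p q r = 0 := by
  unfold ang
  apply arccos_of_one_le
  have := exp_pos q
  have := exp_pos r
  have := exp_pos p
  rw [le_div_iff₀ (by positivity)]
  nlinarith

lemma ang_eq_zero' {p q r : ℝ} (h : exp p + exp q ≤ exp r) : ang p q r = 0 := by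
  rw [ang_swap]
  exact ang_eq_zero h

lemma cos_ang {p q r : ℝ} (h1 : exp p < exp q + exp r) (h2 : exp q < exp r + exp p)
    (h3 : exp r < exp p + exp q) :
    cos (ang p q r) = (exp q ^ 2 + exp r ^ 2 - exp p ^ 2) / (2 * exp q * exp r) := by
  have := exp_pos q
  have := exp_pos r
  have := exp_pos p
  unfold ang
  apply cos_arccos
  · rw [le_div_iff₀ (by positivity)]
    nlinarith
  · rw [div_le_iff₀ (by positivity)]
    nlinarith

/-- Sixteen times the squared area. -/
def heron (x y z : ℝ) : ℝ := (x + y + z) * (y + z - x) * (z + x - y) * (x + y - z)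

lemma sin_ang {p q r : ℝ} (h1 : exp p < exp q + exp r) (h2 : exp q < exp r + exp p)
    (h3 : exp r < exp p + exp q) :
    2 * sin (ang p q r) = √(heron (exp p) (exp q) (exp r)) / (exp q * exp r) := by
  have := exp_pos q
  have := exp_pos r
  unfold ang
  rw [sin_arccos, eq_div_iff (by positivity)]
  have e : heron (exp p) (exp q) (exp r) = (1 - ((exp q ^ 2 + exp r ^ 2 - exp p ^ 2)
      / (2 * exp q * exp r)) ^ 2) * (2 * (exp q * exp r)) ^ 2 := by
    unfold heron
    field_simp
    ring
  rw [e, sqrt_mul' _ (by positivity), sqrt_sq (by positivity)]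
  ring

lemma heron_pos {p q r : ℝ} (h1 : exp p < exp q + exp r) (h2 : exp q < exp r + exp p)
    (h3 : exp r < exp p + exp q) : 0 < heron (exp p) (exp q) (exp r) := by
  have := exp_pos q
  have := exp_pos r
  have := exp_pos p
  unfold heron
  have := sub_pos.2 h1
  have := sub_pos.2 h2
  have := sub_pos.2 h3
  positivity

lemma heron_cyc (x y z : ℝ) : heron x y z = heron y z x := by
  unfold heron
  ring

lemma log_sin_ang {p q r : ℝ} (h1 : exp p < exp q + exp r) (h2 : exp q < exp r + exp p)
    (h3 : exp r < exp p + exp q) :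
    log (2 * sin (ang p q r)) = log (√(heron (exp p) (exp q) (exp r))) - q - r := by
  rw [sin_ang h1 h2 h3, log_div (sqrt_pos.2 (heron_pos h1 h2 h3)).ne' (by positivity),
    log_mul (by positivity) (by positivity), log_exp, log_exp]
  ring

lemma ang_pos {p q r : ℝ} (h1 : exp p < exp q + exp r) (h2 : exp q < exp r + exp p)
    (h3 : exp r < exp p + exp q) : 0 < ang p q r := by
  have h := sin_ang h1 h2 h3
  have hp := sqrt_pos.2 (heron_pos h1 h2 h3)
  have : 0 < √(heron (exp p) (exp q) (exp r)) / (exp q * exp r) := by positivity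
  rcases (ang_nonneg p q r).eq_or_lt with h0 | h0
  · rw [← h0, sin_zero] at h
    linarith
  · exact h0

lemma ang_sum_nondeg {p q r : ℝ} (h1 : exp p < exp q + exp r) (h2 : exp q < exp r + exp p)
    (h3 : exp r < exp p + exp q) : ang p q r + ang q r p + ang r p q = π := by
  have c1 := cos_ang h1 h2 h3
  have c2 := cos_ang h2 h3 h1
  have c3 := cos_ang h3 h1 h2
  have s1 := sin_ang h1 h2 h3
  have s2 := sin_ang h2 h3 h1
  rw [← heron_cyc] at s2
  have hp := heron_pos h1 h2 h3
  have hx := exp_pos p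
  have hy := exp_pos q
  have hz := exp_pos r
  have hle : ang p q r ≤ π - ang q r p := by
    rw [← Real.strictAntiOn_cos.le_iff_ge
      ⟨by linarith [ang_le q r p], by linarith [ang_nonneg q r p]⟩
      ⟨ang_nonneg p q r, ang_le p q r⟩, cos_pi_sub, c1, c2, ← sub_nonneg]
    have : (exp q ^ 2 + exp r ^ 2 - exp p ^ 2) / (2 * exp q * exp r) -
        -((exp r ^ 2 + exp p ^ 2 - exp q ^ 2) / (2 * exp r * exp p))
        = (exp p + exp q) * ((exp r + exp p - exp q) * (exp q + exp r - exp p))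
          / (2 * exp p * exp q * exp r) := by
      field_simp
      ring
    rw [this]
    have := sub_pos.2 h1
    have := sub_pos.2 h2
    positivity
  have hcos : cos (ang p q r + ang q r p) = cos (π - ang r p q) := by
    rw [cos_pi_sub, cos_add, c1, c2, c3]
    have hss : sin (ang p q r) * sin (ang q r p) = heron (exp p) (exp q) (exp r)
        / (4 * exp p * exp q * exp r ^ 2) := by
      have : sin (ang p q r) * sin (ang q r p)
          = (2 * sin (ang p q r)) * (2 * sin (ang q r p)) / 4 := by ring
      rw [this, s1, s2, div_mul_div_comm, mul_self_sqrt hp.le]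
      field_simp
    rw [hss]
    unfold heron
    field_simp
    ring
  have := injOn_cos ⟨by linarith [ang_nonneg p q r, ang_nonneg q r p], by linarith⟩
    ⟨by linarith [ang_le r p q], by linarith [ang_nonneg r p q]⟩ hcos
  linarith

lemma ang_sum (p q r : ℝ) : ang p q r + ang q r p + ang r p q = π := by
  by_cases h1 : exp p < exp q + exp r
  · by_cases h2 : exp q < exp r + exp p
    · by_cases h3 : exp r < exp p + exp q
      · exact ang_sum_nondeg h1 h2 h3
      · push Not at h3
        rw [ang_eq_pi h3, ang_eq_zero' h3, ang_eq_zero (by linarith)]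
        ring
    · push Not at h2
      rw [ang_eq_pi h2, ang_eq_zero' h2, ang_eq_zero (by linarith)]
      ring
  · push Not at h1
    rw [ang_eq_pi h1, ang_eq_zero' h1, ang_eq_zero (by linarith)]
    ring

lemma ang_continuous {X : Type*} [TopologicalSpace X] {p q r : X → ℝ} {x : X}
    (hp : ContinuousAt p x) (hq : ContinuousAt q x) (hr : ContinuousAt r x) :
    ContinuousAt (fun s => ang (p s) (q s) (r s)) x := by
  unfold ang
  apply continuous_arccos.continuousAt.comp
  apply ContinuousAt.div
  · fun_prop
  · fun_prop
  · positivity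

/-- Half of the co-volume function in terms of the three half sums of lengths. -/
def Gf (p q r : ℝ) : ℝ :=
  lob (ang p q r) + lob (ang q r p) + lob (ang r p q)
    + (ang p q r * p + ang q r p * q + ang r p q * r)

lemma Gf_cyc (p q r : ℝ) : Gf p q r = Gf q r p := by
  unfold Gf
  ring

lemma Gf_max_nondeg {p q r : ℝ} (h1 : exp p < exp q + exp r) (h2 : exp q < exp r + exp p)
    (h3 : exp r < exp p + exp q) {b1 b2 b3 : ℝ} (hb1 : 0 ≤ b1) (hb2 : 0 ≤ b2) (hb3 : 0 ≤ b3)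
    (hb : b1 + b2 + b3 = π) :
    lob b1 + lob b2 + lob b3 + (b1 * p + b2 * q + b3 * r) ≤ Gf p q r := by
  have hs := ang_sum p q r
  have h := vol_tangent (ang_pos h1 h2 h3) (ang_pos h2 h3 h1) (ang_pos h3 h1 h2) hb1 hb2 hb3 hs hb
  have l1 := log_sin_ang h1 h2 h3
  have l2 := log_sin_ang h2 h3 h1
  have l3 := log_sin_ang h3 h1 h2
  rw [← heron_cyc] at l2
  rw [heron_cyc] at l3
  rw [l1, l2, l3] at h
  unfold Gf
  generalize log (√(heron (exp p) (exp q) (exp r))) = c at h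
  have hb' : b3 = π - b1 - b2 := by linarith
  have hs' : ang r p q = π - ang p q r - ang q r p := by linarith
  have e : (b1 - ang p q r) * (c - q - r) + (b2 - ang q r p) * (c - r - p)
      + (b3 - ang r p q) * (c - p - q) = ((b1 - ang p q r) * p + (b2 - ang q r p) * q
      + (b3 - ang r p q) * r) := by
    linear_combination (c - p - q - r) * hb - (c - p - q - r) * hs
  rw [e] at h
  linarith

lemma Gf_max_deg {p q r : ℝ} (h1 : exp q + exp r ≤ exp p)
    {b1 b2 b3 : ℝ} (hb1 : 0 ≤ b1) (hb2 : 0 ≤ b2) (hb3 : 0 ≤ b3)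
    (hb : b1 + b2 + b3 = π) :
    lob b1 + lob b2 + lob b3 + (b1 * p + b2 * q + b3 * r) ≤ Gf p q r := by
  have hq := exp_pos q
  have hr := exp_pos r
  obtain ⟨p0, hp0⟩ : ∃ p0, exp p0 = exp q + exp r := ⟨log (exp q + exp r), exp_log (by positivity)⟩
  have hle : p0 ≤ p := exp_le_exp.1 (by linarith)
  have hlim : lob b1 + lob b2 + lob b3 + (b1 * p0 + b2 * q + b3 * r) ≤ Gf p0 q r := by
    have t1 : ContinuousAt (fun s => Gf s q r) p0 := by
      have a1 : ContinuousAt (fun s => ang s q r) p0 :=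
        ang_continuous continuousAt_id continuousAt_const continuousAt_const
      have a2 : ContinuousAt (fun s => ang q r s) p0 :=
        ang_continuous continuousAt_const continuousAt_const continuousAt_id
      have a3 : ContinuousAt (fun s => ang r s q) p0 :=
        ang_continuous continuousAt_const continuousAt_id continuousAt_const
      have l := lob_continuous
      unfold Gf
      fun_prop
    have t2 : ContinuousAt (fun s => lob b1 + lob b2 + lob b3 + (b1 * s + b2 * q + b3 * r)) p0 := by
      fun_prop
    refine le_of_tendsto_of_tendsto (b := nhdsWithin p0 (Set.Iio p0))
      (t2.tendsto.mono_left nhdsWithin_le_nhds) (t1.tendsto.mono_left nhdsWithin_le_nhds) ?_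
    have e2 : ∀ᶠ s in nhds p0, exp q < exp r + exp s :=
      (show ContinuousAt (fun s => exp r + exp s) p0 by fun_prop).eventually
        (lt_mem_nhds (by linarith : exp q < exp r + exp p0))
    have e3 : ∀ᶠ s in nhds p0, exp r < exp s + exp q :=
      (show ContinuousAt (fun s => exp s + exp q) p0 by fun_prop).eventually
        (lt_mem_nhds (by linarith : exp r < exp p0 + exp q))
    filter_upwards [self_mem_nhdsWithin, nhdsWithin_le_nhds e2, nhdsWithin_le_nhds e3]
      with s hs k2 k3
    have hs' : exp s < exp p0 := exp_lt_exp.2 hs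
    exact Gf_max_nondeg (by linarith) k2 k3 hb1 hb2 hb3 hb
  have hG : ∀ s, exp q + exp r ≤ exp s → Gf s q r = lob π + lob 0 + lob 0 + π * s := by
    intro s hs
    unfold Gf
    rw [ang_eq_pi hs, ang_eq_zero' hs, ang_eq_zero (by linarith)]
    ring
  rw [hG p0 hp0.ge] at hlim
  rw [hG p h1]
  have : b1 * (p - p0) ≤ π * (p - p0) :=
    mul_le_mul_of_nonneg_right (by linarith) (by linarith)
  linarith

lemma Gf_max (p q r : ℝ) {b1 b2 b3 : ℝ} (hb1 : 0 ≤ b1) (hb2 : 0 ≤ b2) (hb3 : 0 ≤ b3)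
    (hb : b1 + b2 + b3 = π) :
    lob b1 + lob b2 + lob b3 + (b1 * p + b2 * q + b3 * r) ≤ Gf p q r := by
  by_cases h1 : exp p < exp q + exp r
  · by_cases h2 : exp q < exp r + exp p
    · by_cases h3 : exp r < exp p + exp q
      · exact Gf_max_nondeg h1 h2 h3 hb1 hb2 hb3 hb
      · push Not at h3
        have := Gf_max_deg h3 hb3 hb1 hb2 (by linarith)
        rw [Gf_cyc] at this
        linarith
    · push Not at h2
      have := Gf_max_deg h2 hb2 hb3 hb1 (by linarith)
      rw [← Gf_cyc] at this
      linarith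
  · push Not at h1
    exact Gf_max_deg h1 hb1 hb2 hb3 hb

lemma Gf_hasDerivAt {p q r : ℝ → ℝ} {p' q' r' t : ℝ} (hp : HasDerivAt p p' t)
    (hq : HasDerivAt q q' t) (hr : HasDerivAt r r' t) :
    HasDerivAt (fun s => Gf (p s) (q s) (r s))
      (ang (p t) (q t) (r t) * p' + ang (q t) (r t) (p t) * q' + ang (r t) (p t) (q t) * r') t := by
  set A1 : ℝ → ℝ := fun s => ang (p s) (q s) (r s) with hA1
  set A2 : ℝ → ℝ := fun s => ang (q s) (r s) (p s) with hA2
  set A3 : ℝ → ℝ := fun s => ang (r s) (p s) (q s) with hA3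
  have c1 : ContinuousAt A1 t := ang_continuous hp.continuousAt hq.continuousAt hr.continuousAt
  have c2 : ContinuousAt A2 t := ang_continuous hq.continuousAt hr.continuousAt hp.continuousAt
  have c3 : ContinuousAt A3 t := ang_continuous hr.continuousAt hp.continuousAt hq.continuousAt
  have key : ∀ u v : ℝ, Gf (p u) (q u) (r u) + (A1 u * (p v - p u) + A2 u * (q v - q u)
      + A3 u * (r v - r u)) ≤ Gf (p v) (q v) (r v) := by
    intro u v
    have := Gf_max (p v) (q v) (r v) (ang_nonneg (p u) (q u) (r u)) (ang_nonneg (q u) (r u) (p u))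
      (ang_nonneg (r u) (p u) (q u)) (ang_sum _ _ _)
    refine le_trans (le_of_eq ?_) this
    simp only [Gf, hA1, hA2, hA3]
    ring
  set R : ℝ → ℝ := fun s => Gf (p s) (q s) (r s) - (Gf (p t) (q t) (r t)
    + (A1 t * (p s - p t) + A2 t * (q s - q t) + A3 t * (r s - r t))) with hR
  have hsm : ∀ (A f : ℝ → ℝ) (f' : ℝ), ContinuousAt A t → HasDerivAt f f' t →
      (fun s => (A s - A t) * (f s - f t)) =o[nhds t] (fun s => s - t) := by
    intro A f f' hA hf
    have h1 : (fun s => A s - A t) =o[nhds t] (fun _ => (1 : ℝ)) := by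
      rw [Asymptotics.isLittleO_one_iff]
      have := hA.tendsto.sub_const (A t)
      simpa using this
    have h2 : (fun s => f s - f t) =O[nhds t] (fun s => s - t) := hf.isBigO_sub
    simpa using h1.mul_isBigO h2
  have hRo : R =o[nhds t] (fun s => s - t) := by
    have hS := ((hsm A1 p p' c1 hp).add (hsm A2 q q' c2 hq)).add (hsm A3 r r' c3 hr)
    refine Asymptotics.IsBigO.trans_isLittleO ?_ hS
    refine Asymptotics.IsBigO.of_bound 1 (Filter.Eventually.of_forall fun s => ?_)
    have k1 := key t s
    have k2 := key s t
    have n1 : 0 ≤ R s := by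
      simp only [hR]
      linarith
    have n2 : R s ≤ (A1 s - A1 t) * (p s - p t) + (A2 s - A2 t) * (q s - q t)
        + (A3 s - A3 t) * (r s - r t) := by
      simp only [hR]
      linarith
    rw [one_mul, Real.norm_of_nonneg n1]
    exact n2.trans (le_abs_self _)
  have hRd : HasDerivAt R 0 t := by
    rw [hasDerivAt_iff_isLittleO]
    have : R t = 0 := by simp [hR]
    simpa [this] using hRo
  have hlin := (((((hp.sub_const (p t)).const_mul (A1 t)).add
    ((hq.sub_const (q t)).const_mul (A2 t))).add
    ((hr.sub_const (r t)).const_mul (A3 t))).const_add (Gf (p t) (q t) (r t))).add hRd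
  rw [add_zero] at hlin
  refine hlin.congr_of_eventuallyEq (Filter.Eventually.of_forall fun s => ?_)
  simp [hR]

lemma genAngle_eq (y : Fin 3 → ℝ) (i : Fin 3) :
    genAngle (fun k => exp (y k)) i = ang (y i) (y (i + 1)) (y (i + 2)) := by
  unfold genAngle
  split_ifs with h1 h2
  · exact (ang_eq_pi h1).symm
  · rcases h2 with h2 | h2
    · exact (ang_eq_zero h2).symm
    · exact (ang_eq_zero' h2).symm
  · rfl

lemma triSides_eq (l : Fin 6 → ℝ) :
    triSides l = fun k => exp ((![(l 0 + l 5) / 2, (l 1 + l 4) / 2, (l 2 + l 3) / 2] : Fin 3 → ℝ) k) := by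
  funext k
  fin_cases k <;> simp [triSides]

lemma dihedral_eq (l : Fin 6 → ℝ) :
    dihedral l = ![ang ((l 0 + l 5) / 2) ((l 1 + l 4) / 2) ((l 2 + l 3) / 2),
      ang ((l 1 + l 4) / 2) ((l 2 + l 3) / 2) ((l 0 + l 5) / 2),
      ang ((l 2 + l 3) / 2) ((l 0 + l 5) / 2) ((l 1 + l 4) / 2),
      ang ((l 2 + l 3) / 2) ((l 0 + l 5) / 2) ((l 1 + l 4) / 2),
      ang ((l 1 + l 4) / 2) ((l 2 + l 3) / 2) ((l 0 + l 5) / 2),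
      ang ((l 0 + l 5) / 2) ((l 1 + l 4) / 2) ((l 2 + l 3) / 2)] := by
  funext p
  unfold dihedral
  rw [triSides_eq, genAngle_eq]
  fin_cases p <;> rfl

lemma cov6_eq (l : Fin 6 → ℝ) :
    cov6 l = 2 * Gf ((l 0 + l 5) / 2) ((l 1 + l 4) / 2) ((l 2 + l 3) / 2) := by
  unfold cov6 vol6 Gf
  rw [dihedral_eq]
  simp [Fin.sum_univ_six]
  ring

lemma cov6_hasDerivAt {l : ℝ → Fin 6 → ℝ} {l' : Fin 6 → ℝ} {t : ℝ}
    (h : ∀ p, HasDerivAt (fun s => l s p) (l' p) t) :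
    HasDerivAt (fun s => cov6 (l s)) (∑ p : Fin 6, dihedral (l t) p * l' p) t := by
  have := (Gf_hasDerivAt (((h 0).add (h 5)).div_const 2) (((h 1).add (h 4)).div_const 2)
    (((h 2).add (h 3)).div_const 2)).const_mul 2
  simp only [cov6_eq]
  refine HasDerivAt.congr_deriv (f := fun s => 2 * Gf ((l s 0 + l s 5) / 2) ((l s 1 + l s 4) / 2)
    ((l s 2 + l s 3) / 2)) this ?_
  rw [dihedral_eq]
  simp [Fin.sum_univ_six]
  ring

/-- along any solution of the extended combinatorial Ricci flow,
`(d/dt) H̃(l(t)) = −Σ_e K̃_e(l(t))² ≤ 0`, so `H̃(l(t))` is non-increasing on `[0,∞)`. -/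
theorem Htilde_nonincreasing_along_flow
    [Fintype T] [Fintype E] [DecidableEq E] [Nonempty T] (glue : T → Fin 6 → E)
    (l : ℝ → E → ℝ) (hflow : ∀ t : ℝ, 0 ≤ t → HasDerivAt l (Ric glue (l t)) t) :
    (∀ t : ℝ, 0 ≤ t →
      HasDerivAt (fun s => Htilde glue (l s)) (-∑ e : E, (Ric glue (l t) e) ^ 2) t ∧
      (-∑ e : E, (Ric glue (l t) e) ^ 2) ≤ 0) ∧
    AntitoneOn (fun t => Htilde glue (l t)) (Set.Ici 0) := by
  have hder : ∀ t : ℝ, 0 ≤ t →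
      HasDerivAt (fun s => Htilde glue (l s)) (-∑ e : E, (Ric glue (l t) e) ^ 2) t := by
    intro t ht
    have hc : ∀ e, HasDerivAt (fun s => l s e) (Ric glue (l t) e) t :=
      hasDerivAt_pi.1 (hflow t ht)
    have h1 : HasDerivAt (fun s => ∑ σ : T, cov6 (pullback glue (l s) σ))
        (∑ σ : T, ∑ p : Fin 6, dihedral (pullback glue (l t) σ) p * Ric glue (l t) (glue σ p)) t :=
      HasDerivAt.fun_sum fun σ _ => cov6_hasDerivAt fun p => hc (glue σ p)
    have h2 : HasDerivAt (fun s => 2 * Real.pi * ∑ e : E, l s e)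
        (2 * Real.pi * ∑ e : E, Ric glue (l t) e) t :=
      (HasDerivAt.fun_sum fun e _ => hc e).const_mul _
    have h3 := h1.sub h2
    refine HasDerivAt.congr_deriv (f := fun s => Htilde glue (l s)) h3 ?_
    generalize hK : Ric glue (l t) = K
    have hKe : ∀ e, K e = 2 * Real.pi -
        ∑ σ : T, ∑ p : Fin 6, if glue σ p = e then dihedral (pullback glue (l t) σ) p else 0 := by
      intro e
      rw [← hK]
      rfl
    have h4 : ∑ σ : T, ∑ p : Fin 6, dihedral (pullback glue (l t) σ) p * K (glue σ p)
        = ∑ e : E, (2 * Real.pi - K e) * K e := by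
      have : ∀ e, (2 * Real.pi - K e) * K e = ∑ σ : T, ∑ p : Fin 6,
          if glue σ p = e then dihedral (pullback glue (l t) σ) p * K e else 0 := by
        intro e
        have : 2 * Real.pi - K e = ∑ σ : T, ∑ p : Fin 6,
            if glue σ p = e then dihedral (pullback glue (l t) σ) p else 0 := by
          rw [hKe e]
          ring
        rw [this, Finset.sum_mul]
        refine Finset.sum_congr rfl fun σ _ => ?_
        rw [Finset.sum_mul]
        refine Finset.sum_congr rfl fun p _ => ?_
        rw [ite_mul, zero_mul]
      simp_rw [this]
      symm
      rw [Finset.sum_comm]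
      refine Finset.sum_congr rfl fun σ _ => ?_
      rw [Finset.sum_comm]
      refine Finset.sum_congr rfl fun p _ => ?_
      simp
    have h5 : ∑ e : E, (2 * Real.pi - K e) * K e
        = 2 * Real.pi * ∑ e : E, K e - ∑ e : E, K e ^ 2 := by
      rw [Finset.mul_sum, ← Finset.sum_sub_distrib]
      exact Finset.sum_congr rfl fun e _ => by ring
    rw [h4, h5]
    ring
  have hneg : ∀ t : ℝ, (-∑ e : E, (Ric glue (l t) e) ^ 2) ≤ 0 := by
    intro t
    have : 0 ≤ ∑ e : E, (Ric glue (l t) e) ^ 2 := Finset.sum_nonneg fun e _ => sq_nonneg _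
    linarith
  refine ⟨fun t ht => ⟨hder t ht, hneg t⟩, ?_⟩
  refine antitoneOn_of_deriv_nonpos (convex_Ici 0) ?_ ?_ ?_
  · exact fun t ht => (hder t ht).continuousAt.continuousWithinAt
  · intro t ht
    rw [interior_Ici] at ht
    exact (hder t (le_of_lt ht)).differentiableAt.differentiableWithinAt
  · intro t ht
    rw [interior_Ici] at ht
    rw [(hder t (le_of_lt ht)).deriv]
    exact hneg t
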